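/- arXiv:1510.01400 — 3 statements merged into one kernel-verified Lean document; each statement's English description precedes it below -/
import Mathlib

section
/- Let f ∈ ℂ[z_1,…,z_ℓ] be a nonconstant homogeneous polynomial. Then the restriction of f to the complement of its zero locus, f : ℂ^ℓ ∖ f^{-1}(0) → ℂ^*, is a locally trivial fiber bundle with fiber F = f^{-1}(1): every point of ℂ^* = ℂ ∖ {0} has an open neighborhood V together with a homeomorphism f^{-1}(V) ≅ V × F commuting with the projections to V. -/
/-!
Homogeneity gives `f (t • z) = t ^ n * f z`, and `n ≠ 0` because `f` is nonconstant. On the open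
set `V` of those `v` for which `v / c` avoids the closed negative real axis there is a continuous
nowhere vanishing `n`-th root `s` of the identity, built from the principal logarithm. Rescaling
`z` by `(s (f z))⁻¹` moves it into the Milnor fiber, so `z ↦ (f z, (s (f z))⁻¹ • z)` trivializes
`f` over `V`, with inverse `(v, w) ↦ s v • w`.
-/

theorem eval_smul_of_isHomogeneous {ℓ n : ℕ} {f : MvPolynomial (Fin ℓ) ℂ}
    (hf : f.IsHomogeneous n) (t : ℂ) (z : Fin ℓ → ℂ) :
    MvPolynomial.eval (t • z) f = t ^ n * MvPolynomial.eval z f := by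
  rw [MvPolynomial.eval_eq, MvPolynomial.eval_eq, Finset.mul_sum]
  refine Finset.sum_congr rfl fun d hd => ?_
  have hdeg : ∑ i ∈ d.support, d i = n := by
    simpa [Finsupp.degree] using hf.degree_eq_sum_deg_support hd |>.symm
  simp only [Pi.smul_apply, smul_eq_mul, mul_pow, Finset.prod_mul_distrib,
    Finset.prod_pow_eq_pow_sum, hdeg]
  ring

/-- Every nonzero complex number `c` lies in an open set avoiding `0` that carries a continuous
branch of the `n`-th root, namely the plane slit along the ray through `-c`. -/
theorem exists_local_root {n : ℕ} (hn : n ≠ 0) {c : ℂ} (hc : c ≠ 0) :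
    ∃ V : Set ℂ, IsOpen V ∧ c ∈ V ∧ (∀ v ∈ V, v ≠ 0) ∧
      ∃ s : ℂ → ℂ, ContinuousOn s V ∧ (∀ v, s v ≠ 0) ∧ ∀ v ∈ V, s v ^ n = v := by
  have hV0 : ∀ v : ℂ, v / c ∈ Complex.slitPlane → v ≠ 0 := by
    rintro v hv rfl
    exact Complex.slitPlane_ne_zero hv (zero_div c)
  refine ⟨(fun v => v / c) ⁻¹' Complex.slitPlane,
    Complex.isOpen_slitPlane.preimage (by fun_prop), by simp [hc], hV0,
    fun v => Complex.exp ((Complex.log (v / c) + Complex.log c) / n), ?_,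
    fun v => Complex.exp_ne_zero _, fun v hv => ?_⟩
  · have hlog : ContinuousOn (fun v : ℂ => Complex.log (v / c))
        ((fun v => v / c) ⁻¹' Complex.slitPlane) :=
      ContinuousOn.clog (by fun_prop) fun v hv => hv
    fun_prop
  · have hn' : (n : ℂ) ≠ 0 := Nat.cast_ne_zero.mpr hn
    rw [← Complex.exp_nat_mul, mul_div_cancel₀ _ hn', Complex.exp_add,
      Complex.exp_log (Complex.slitPlane_ne_zero hv), Complex.exp_log hc, div_mul_cancel₀ _ hc]

theorem milnor_fibration {ℓ n : ℕ} (f : MvPolynomial (Fin ℓ) ℂ)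
    (hf : f.IsHomogeneous n) (hnc : ∀ c : ℂ, f ≠ MvPolynomial.C c) :
    ∀ c : ℂ, c ≠ 0 →
      ∃ V : Set ℂ, IsOpen V ∧ c ∈ V ∧ (∀ v ∈ V, v ≠ 0) ∧
        ∃ φ : {z : Fin ℓ → ℂ // MvPolynomial.eval z f ∈ V} ≃ₜ
            V × {z : Fin ℓ → ℂ // MvPolynomial.eval z f = 1},
          ∀ z, ((φ z).1 : ℂ) = MvPolynomial.eval z.1 f := by
  intro c hc
  have hn : n ≠ 0 := by
    rintro rfl
    exact hnc _ (MvPolynomial.totalDegree_eq_zero_iff_eq_C.mp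
      (Nat.le_zero.mp hf.totalDegree_le))
  obtain ⟨V, hVo, hcV, hV0, s, hs, hs0, hsn⟩ := exists_local_root hn hc
  have hev : ∀ v ∈ V, ∀ w : Fin ℓ → ℂ, MvPolynomial.eval w f = 1 →
      MvPolynomial.eval (s v • w) f = v := by
    intro v hv w hw
    rw [eval_smul_of_isHomogeneous hf, hsn v hv, hw, mul_one]
  have hcont : Continuous fun z : {z : Fin ℓ → ℂ // MvPolynomial.eval z f ∈ V} =>
      MvPolynomial.eval z.1 f :=
    (MvPolynomial.continuous_eval f).comp continuous_subtype_val
  refine ⟨V, hVo, hcV, hV0,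
    { toFun := fun z => (⟨MvPolynomial.eval z.1 f, z.2⟩,
        ⟨(s (MvPolynomial.eval z.1 f))⁻¹ • z.1, by
          rw [eval_smul_of_isHomogeneous hf, inv_pow, hsn _ z.2]
          exact inv_mul_cancel₀ (hV0 _ z.2)⟩)
      invFun := fun p => ⟨s p.1 • p.2.1, by
        rw [hev _ p.1.2 _ p.2.2]
        exact p.1.2⟩
      left_inv := fun z => Subtype.ext (smul_inv_smul₀ (hs0 _) z.1)
      right_inv := ?_
      continuous_toFun := ?_
      continuous_invFun := ?_ }, fun z => rfl⟩
  · rintro ⟨⟨v, hv⟩, ⟨w, hw⟩⟩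
    have h := hev v hv w hw
    refine Prod.ext (Subtype.ext h) (Subtype.ext ?_)
    change (s (MvPolynomial.eval (s v • w) f))⁻¹ • s v • w = w
    rw [h, inv_smul_smul₀ (hs0 v)]
  · have hsc : Continuous fun z : {z : Fin ℓ → ℂ // MvPolynomial.eval z f ∈ V} =>
        s (MvPolynomial.eval z.1 f) := hs.comp_continuous hcont fun z => z.2
    exact (hcont.subtype_mk _).prodMk
      (((hsc.inv₀ fun z => hs0 _).smul continuous_subtype_val).subtype_mk _)
  · have hsc : Continuous fun p : V × {z : Fin ℓ → ℂ // MvPolynomial.eval z f = 1} =>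
        s p.1 := hs.comp_continuous (by fun_prop) fun p => p.1.2
    exact (hsc.smul (continuous_subtype_val.comp continuous_snd)).subtype_mk _
end

section
/- Let A be the reflection arrangement of type B_3 in ℂ³, consisting of the nine hyperplanes defined by the linear forms x, y, z, x−y, x+y, x−z, x+z, y−z, y+z (so Q(A) = xyz(x²−y²)(x²−z²)(y²−z²)). Then A admits a multinet whose multiplicity vector m assigns 2 to each of the coordinate hyperplanes {x=0}, {y=0}, {z=0} and 1 to the remaining six hyperplanes, and this multinet is pointed at the hyperplane H = {z = 0}. -/
/-!
The three products `x²(y² - z²)`, `y²(z² - x²)`, `z²(x² - y²)` add up to zero, so they span a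
pencil of quartics. Its base locus consists of seven lines in `ℂ³`: the coordinate axes, where
each product vanishes to order two, and the lines spanned by `(1, ±1, ±1)`, where each vanishes to
order one. These three products are the parts of the multinet and the seven lines are its flats.
The only flats inside `z = 0` are the `x`- and `y`-axes, of multiplicity two, whence pointedness.

The combinatorial conditions are finite checks on coordinates. Connectedness
(`isConnected_model`) holds because each plane of a part stays connected after deleting its flats
(`isPreconnected_punctured_plane`), and the planes `v j = ± v k` meet the plane `v i = 0` in lines
outside the base locus.
-/

open scoped Classical


/-- A multinet on a central arrangement `A` of linear forms on `ℂ^ℓ` with multiplicity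
vector `m`: a partition of `A` into `k ≥ 3` parts (given by `part`, surjective onto `Fin k`),
together with a finite set `X` of rank-2 flats (codimension-2 intersections of hyperplanes
of `A`) such that any two hyperplanes from different parts meet in a flat of `X`, the total
multiplicity `d` of each part is the same, for each flat `Z ∈ X` the multiplicity
`nZ Z = Σ_{f ∈ A_i, Z ⊆ ker f} m f` is independent of the part `i`, and the union of the
hyperplanes in each part, with the flats of `X` removed, is connected. -/
structure Multinet {ℓ : ℕ} (A : Finset ((Fin ℓ → ℂ) →ₗ[ℂ] ℂ))
    (m : ((Fin ℓ → ℂ) →ₗ[ℂ] ℂ) → ℕ) where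
  /-- the number of parts -/
  k : ℕ
  three_le_k : 3 ≤ k
  /-- the multiplicities are positive -/
  m_pos : ∀ f ∈ A, 0 < m f
  /-- the partition of `A` into `k` parts -/
  part : ((Fin ℓ → ℂ) →ₗ[ℂ] ℂ) → Fin k
  part_surj : ∀ i : Fin k, ∃ f ∈ A, part f = i
  /-- the distinguished set of rank-2 flats -/
  X : Finset (Submodule ℂ (Fin ℓ → ℂ))
  X_codim_two : ∀ Z ∈ X, Module.finrank ℂ Z + 2 = ℓ
  X_flat : ∀ Z ∈ X, ∃ S ⊆ A, Z = S.inf fun f => LinearMap.ker f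
  /-- hyperplanes from different parts intersect in a flat of `X` -/
  inf_mem_X : ∀ f ∈ A, ∀ g ∈ A, part f ≠ part g → (LinearMap.ker f ⊓ LinearMap.ker g) ∈ X
  /-- the common total multiplicity of each part -/
  d : ℕ
  sum_part : ∀ i : Fin k, ∑ f ∈ A.filter (fun f => part f = i), m f = d
  /-- the multiplicity of each flat of `X` -/
  nZ : Submodule ℂ (Fin ℓ → ℂ) → ℕ
  sum_flat : ∀ Z ∈ X, ∀ i : Fin k,
    ∑ f ∈ A.filter (fun f => part f = i ∧ Z ≤ LinearMap.ker f), m f = nZ Z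
  /-- each part is connected away from the flats of `X` -/
  connected : ∀ i : Fin k,
    IsConnected ((⋃ f ∈ A.filter (fun f => part f = i), (LinearMap.ker f : Set (Fin ℓ → ℂ))) \
      ⋃ Z ∈ X, (Z : Set (Fin ℓ → ℂ)))

/-- A multinet is pointed at a hyperplane `h ∈ A` if `m h > 1` and `m h` divides `nZ Z` for
every flat `Z ∈ X` contained in the hyperplane `ker h`. -/
def Multinet.PointedAt {ℓ : ℕ} {A : Finset ((Fin ℓ → ℂ) →ₗ[ℂ] ℂ)}
    {m : ((Fin ℓ → ℂ) →ₗ[ℂ] ℂ) → ℕ} (M : Multinet A m)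
    (h : (Fin ℓ → ℂ) →ₗ[ℂ] ℂ) : Prop :=
  h ∈ A ∧ 1 < m h ∧ ∀ Z ∈ M.X, Z ≤ LinearMap.ker h → m h ∣ M.nZ Z

/-- The linear form `x` on `ℂ³`. -/
noncomputable def xf : (Fin 3 → ℂ) →ₗ[ℂ] ℂ := LinearMap.proj 0

/-- The linear form `y` on `ℂ³`. -/
noncomputable def yf : (Fin 3 → ℂ) →ₗ[ℂ] ℂ := LinearMap.proj 1

/-- The linear form `z` on `ℂ³`. -/
noncomputable def zf : (Fin 3 → ℂ) →ₗ[ℂ] ℂ := LinearMap.proj 2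

/-- The reflection arrangement of type `B₃` in `ℂ³`, consisting of the nine hyperplanes
defined by the linear forms `x, y, z, x−y, x+y, x−z, x+z, y−z, y+z`
(so `Q(A) = xyz(x²−y²)(x²−z²)(y²−z²)`). -/
noncomputable def B3 : Finset ((Fin 3 → ℂ) →ₗ[ℂ] ℂ) :=
  {xf, yf, zf, xf - yf, xf + yf, xf - zf, xf + zf, yf - zf, yf + zf}

/-- The multiplicity vector on the `B₃` arrangement assigning `2` to each of the coordinate
hyperplanes `{x=0}`, `{y=0}`, `{z=0}` and `1` to the remaining six hyperplanes. -/
noncomputable def mB3 : ((Fin 3 → ℂ) →ₗ[ℂ] ℂ) → ℕ :=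
  fun f => if f = xf ∨ f = yf ∨ f = zf then 2 else 1

/-!
STATEMENT 11: The `B₃` reflection arrangement admits a multinet with the multiplicity
vector `mB3` (which assigns `2` to the coordinate hyperplanes and `1` to the others),
pointed at the hyperplane `H = {z = 0}`.
-/

/-! ### The partition and the base locus -/

/-- The part containing `f`: with coefficients `(a, b, c)`, it is the part `0`, `1`, `2` of
`x, y ± z`, of `y, x ± z`, of `z, x ± y` according to whether `b² = c²`, `a² = c²`, or neither. -/
noncomputable def b3Part (f : (Fin 3 → ℂ) →ₗ[ℂ] ℂ) : Fin 3 :=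
  if (f ![0, 1, 0]) ^ 2 = (f ![0, 0, 1]) ^ 2 then 0
  else if (f ![1, 0, 0]) ^ 2 = (f ![0, 0, 1]) ^ 2 then 1 else 2

/-- Direction vectors of the seven lines in the base locus. -/
noncomputable def b3Dirs : Finset (Fin 3 → ℂ) :=
  {![1, 0, 0], ![0, 1, 0], ![0, 0, 1], ![1, 1, 1], ![1, 1, -1], ![1, -1, 1], ![1, -1, -1]}

/-- The base locus of the multinet, as a set of lines in `ℂ³`. -/
noncomputable def b3X : Finset (Submodule ℂ (Fin 3 → ℂ)) :=
  b3Dirs.image fun w => Submodule.span ℂ {w}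

/-! ### Multiplicity sums -/

lemma form_eq_iff (f g : (Fin 3 → ℂ) →ₗ[ℂ] ℂ) :
    f = g ↔ f ![1, 0, 0] = g ![1, 0, 0] ∧ f ![0, 1, 0] = g ![0, 1, 0] ∧
      f ![0, 0, 1] = g ![0, 0, 1] := by
  constructor
  · rintro rfl; simp
  · rintro ⟨h0, h1, h2⟩
    refine LinearMap.ext fun v => ?_
    have hv : v = v 0 • ![1, 0, 0] + v 1 • ![0, 1, 0] + v 2 • ![0, 0, 1] := by
      ext i; fin_cases i <;> simp
    rw [hv]
    simp only [map_add, map_smul, h0, h1, h2]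

@[simp] lemma xf_apply (v : Fin 3 → ℂ) : xf v = v 0 := rfl
@[simp] lemma yf_apply (v : Fin 3 → ℂ) : yf v = v 1 := rfl
@[simp] lemma zf_apply (v : Fin 3 → ℂ) : zf v = v 2 := rfl

lemma sum_B3 (g : ((Fin 3 → ℂ) →ₗ[ℂ] ℂ) → ℕ) :
    ∑ f ∈ B3, g f = g xf + g yf + g zf + g (xf - yf) + g (xf + yf) + g (xf - zf) + g (xf + zf)
      + g (yf - zf) + g (yf + zf) := by
  have h : (1 : ℂ) ≠ -1 := by norm_num
  have hneg : (-1 : ℂ) ≠ 1 := by norm_num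
  unfold B3
  repeat rw [Finset.sum_insert (by simp [form_eq_iff, -add_eq_left, -left_eq_add, h, hneg])]
  rw [Finset.sum_singleton]
  ring

lemma mB3_values : mB3 xf = 2 ∧ mB3 yf = 2 ∧ mB3 zf = 2 ∧ mB3 (xf - yf) = 1 ∧
    mB3 (xf + yf) = 1 ∧ mB3 (xf - zf) = 1 ∧ mB3 (xf + zf) = 1 ∧ mB3 (yf - zf) = 1 ∧
    mB3 (yf + zf) = 1 := by
  simp [mB3, form_eq_iff, -add_eq_left, -add_eq_right]

lemma b3Part_values : b3Part xf = 0 ∧ b3Part yf = 1 ∧ b3Part zf = 2 ∧ b3Part (xf - yf) = 2 ∧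
    b3Part (xf + yf) = 2 ∧ b3Part (xf - zf) = 1 ∧ b3Part (xf + zf) = 1 ∧
    b3Part (yf - zf) = 0 ∧ b3Part (yf + zf) = 0 := by
  simp [b3Part]

lemma b3_sum_part (i : Fin 3) : ∑ f ∈ B3.filter (fun f => b3Part f = i), mB3 f = 4 := by
  rw [Finset.sum_filter, sum_B3]
  fin_cases i <;> simp [mB3_values, b3Part_values]

/-- Each part has multiplicity `2` along a coordinate axis and `1` along the other four lines. -/
lemma b3_sum_flat (w : Fin 3 → ℂ) (hw : w ∈ b3Dirs) (i : Fin 3) :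
    ∑ f ∈ B3.filter (fun f => b3Part f = i ∧ Submodule.span ℂ {w} ≤ LinearMap.ker f), mB3 f =
      if w 0 * w 1 * w 2 = 0 then 2 else 1 := by
  have h2 : (1 : ℂ) + 1 ≠ 0 := by norm_num
  have h3 : (-1 : ℂ) - 1 ≠ 0 := by norm_num
  have h4 : (-1 : ℂ) + -1 ≠ 0 := by norm_num
  rw [Finset.sum_filter, sum_B3]
  simp only [mB3_values, b3Part_values, Submodule.span_singleton_le_iff_mem, LinearMap.mem_ker,
    LinearMap.add_apply, LinearMap.sub_apply, xf_apply, yf_apply, zf_apply]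
  simp only [b3Dirs, Finset.mem_insert, Finset.mem_singleton] at hw
  rcases hw with rfl | rfl | rfl | rfl | rfl | rfl | rfl <;> fin_cases i <;>
    simp [h2, h3, h4]

/-! ### The base locus consists of the intersections of different parts -/

lemma mem_span_axis0 (v : Fin 3 → ℂ) :
    v ∈ Submodule.span ℂ {(![1, 0, 0] : Fin 3 → ℂ)} ↔ v 1 = 0 ∧ v 2 = 0 := by
  rw [Submodule.mem_span_singleton]
  constructor
  · rintro ⟨a, rfl⟩; simp
  · rintro ⟨h1, h2⟩; exact ⟨v 0, by ext i; fin_cases i <;> simp [h1, h2]⟩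

lemma mem_span_axis1 (v : Fin 3 → ℂ) :
    v ∈ Submodule.span ℂ {(![0, 1, 0] : Fin 3 → ℂ)} ↔ v 0 = 0 ∧ v 2 = 0 := by
  rw [Submodule.mem_span_singleton]
  constructor
  · rintro ⟨a, rfl⟩; simp
  · rintro ⟨h1, h2⟩; exact ⟨v 1, by ext i; fin_cases i <;> simp [h1, h2]⟩

lemma mem_span_axis2 (v : Fin 3 → ℂ) :
    v ∈ Submodule.span ℂ {(![0, 0, 1] : Fin 3 → ℂ)} ↔ v 0 = 0 ∧ v 1 = 0 := by
  rw [Submodule.mem_span_singleton]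
  constructor
  · rintro ⟨a, rfl⟩; simp
  · rintro ⟨h1, h2⟩; exact ⟨v 2, by ext i; fin_cases i <;> simp [h1, h2]⟩

lemma mem_span_diag (s t : ℂ) (v : Fin 3 → ℂ) :
    v ∈ Submodule.span ℂ {(![1, s, t] : Fin 3 → ℂ)} ↔ v 1 = v 0 * s ∧ v 2 = v 0 * t := by
  rw [Submodule.mem_span_singleton]
  constructor
  · rintro ⟨a, rfl⟩; simp
  · rintro ⟨h1, h2⟩; exact ⟨v 0, by ext i; fin_cases i <;> simp [h1, h2]⟩

lemma b3_flat (w : Fin 3 → ℂ) (hw : w ∈ b3Dirs) :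
    ∃ S ⊆ B3, Submodule.span ℂ {w} = S.inf fun f => LinearMap.ker f := by
  have key : ∃ f ∈ B3, ∃ g ∈ B3, ∀ v, v ∈ Submodule.span ℂ {w} ↔ f v = 0 ∧ g v = 0 := by
    simp only [b3Dirs, Finset.mem_insert, Finset.mem_singleton] at hw
    rcases hw with rfl | rfl | rfl | rfl | rfl | rfl | rfl
    · exact ⟨yf, by simp [B3], zf, by simp [B3], fun v => by simp [mem_span_axis0]⟩
    · exact ⟨xf, by simp [B3], zf, by simp [B3], fun v => by simp [mem_span_axis1]⟩
    · exact ⟨xf, by simp [B3], yf, by simp [B3], fun v => by simp [mem_span_axis2]⟩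
    · exact ⟨xf - yf, by simp [B3], xf - zf, by simp [B3], fun v => by
        simp only [mem_span_diag, LinearMap.sub_apply, xf_apply, yf_apply, zf_apply]; grind⟩
    · exact ⟨xf - yf, by simp [B3], xf + zf, by simp [B3], fun v => by
        simp only [mem_span_diag, LinearMap.sub_apply, LinearMap.add_apply,
          xf_apply, yf_apply, zf_apply]; grind⟩
    · exact ⟨xf + yf, by simp [B3], xf - zf, by simp [B3], fun v => by
        simp only [mem_span_diag, LinearMap.sub_apply, LinearMap.add_apply,
          xf_apply, yf_apply, zf_apply]; grind⟩
    · exact ⟨xf + yf, by simp [B3], xf + zf, by simp [B3], fun v => by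
        simp only [mem_span_diag, LinearMap.add_apply, xf_apply, yf_apply, zf_apply]; grind⟩
  obtain ⟨f, hf, g, hg, h⟩ := key
  refine ⟨{f, g}, by simp [Finset.insert_subset_iff, hf, hg], ?_⟩
  ext v
  simp [h]

lemma b3_inf_mem (f : (Fin 3 → ℂ) →ₗ[ℂ] ℂ) (hf : f ∈ B3) (g : (Fin 3 → ℂ) →ₗ[ℂ] ℂ)
    (hg : g ∈ B3) (hfg : b3Part f ≠ b3Part g) : LinearMap.ker f ⊓ LinearMap.ker g ∈ b3X := by
  have key : (∀ v, f v = 0 ∧ g v = 0 ↔ v 1 = 0 ∧ v 2 = 0) ∨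
      (∀ v, f v = 0 ∧ g v = 0 ↔ v 0 = 0 ∧ v 2 = 0) ∨
      (∀ v, f v = 0 ∧ g v = 0 ↔ v 0 = 0 ∧ v 1 = 0) ∨
      (∀ v, f v = 0 ∧ g v = 0 ↔ v 1 = v 0 * 1 ∧ v 2 = v 0 * 1) ∨
      (∀ v, f v = 0 ∧ g v = 0 ↔ v 1 = v 0 * 1 ∧ v 2 = v 0 * -1) ∨
      (∀ v, f v = 0 ∧ g v = 0 ↔ v 1 = v 0 * -1 ∧ v 2 = v 0 * 1) ∨
      (∀ v, f v = 0 ∧ g v = 0 ↔ v 1 = v 0 * -1 ∧ v 2 = v 0 * -1) := by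
    simp only [B3, Finset.mem_insert, Finset.mem_singleton] at hf hg
    rcases hf with rfl | rfl | rfl | rfl | rfl | rfl | rfl | rfl | rfl <;>
    rcases hg with rfl | rfl | rfl | rfl | rfl | rfl | rfl | rfl | rfl <;>
    first
    | (exfalso; revert hfg; simp [b3Part_values]; done)
    | (simp only [LinearMap.add_apply, LinearMap.sub_apply, xf_apply, yf_apply, zf_apply]
       clear hfg
       first
       | (refine Or.inl fun v => ?_; grind)
       | (refine Or.inr (Or.inl fun v => ?_); grind)
       | (refine Or.inr (Or.inr (Or.inl fun v => ?_)); grind)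
       | (refine Or.inr (Or.inr (Or.inr (Or.inl fun v => ?_))); grind)
       | (refine Or.inr (Or.inr (Or.inr (Or.inr (Or.inl fun v => ?_)))); grind)
       | (refine Or.inr (Or.inr (Or.inr (Or.inr (Or.inr (Or.inl fun v => ?_))))); grind)
       | (refine Or.inr (Or.inr (Or.inr (Or.inr (Or.inr (Or.inr fun v => ?_))))); grind))
  have fin (w : Fin 3 → ℂ) (hw : w ∈ b3Dirs)
      (h : ∀ v, f v = 0 ∧ g v = 0 ↔ v ∈ Submodule.span ℂ {w}) :
      LinearMap.ker f ⊓ LinearMap.ker g ∈ b3X := by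
    refine Finset.mem_image.2 ⟨w, hw, ?_⟩
    ext v
    simp [← h]
  rcases key with h | h | h | h | h | h | h
  · exact fin ![1, 0, 0] (by simp [b3Dirs]) (by simpa only [mem_span_axis0])
  · exact fin ![0, 1, 0] (by simp [b3Dirs]) (by simpa only [mem_span_axis1])
  · exact fin ![0, 0, 1] (by simp [b3Dirs]) (by simpa only [mem_span_axis2])
  · exact fin ![1, 1, 1] (by simp [b3Dirs]) (by simpa only [mem_span_diag])
  · exact fin ![1, 1, -1] (by simp [b3Dirs]) (by simpa only [mem_span_diag])
  · exact fin ![1, -1, 1] (by simp [b3Dirs]) (by simpa only [mem_span_diag])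
  · exact fin ![1, -1, -1] (by simp [b3Dirs]) (by simpa only [mem_span_diag])

/-! ### Connectedness of the parts -/

/-- A complex plane spanned by `u` and `v`, with the line `ℂ v` and finitely many lines
`ℂ (u + t v)` removed, is the continuous image of a product of two punctured complex lines. -/
lemma isPreconnected_punctured_plane (u v : Fin 3 → ℂ) (F : Set ℂ) (hF : F.Finite) :
    IsPreconnected ((fun p : ℂ × ℂ => p.1 • (u + p.2 • v)) '' (({0} : Set ℂ)ᶜ ×ˢ Fᶜ)) := by
  have hr : 1 < Module.rank ℝ ℂ := by rw [Complex.rank_real_complex]; norm_num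
  have h1 := ((Set.finite_singleton (0 : ℂ)).countable.isConnected_compl_of_one_lt_rank hr)
  have h2 := (hF.countable.isConnected_compl_of_one_lt_rank hr)
  exact (h1.prod h2).isPreconnected.image _ (by fun_prop)

/-- The hyperplanes of one part with the base locus removed: the planes `v j = ± v k` both meet
the plane `v i = 0` outside the base locus. -/
lemma isConnected_model (i j k : Fin 3) (hij : i ≠ j) (hjk : j ≠ k) (hik : i ≠ k) :
    IsConnected {v : Fin 3 → ℂ | (v i = 0 ∧ v j ≠ 0 ∧ v k ≠ 0) ∨
      (v k = v j ∧ v j ≠ 0 ∧ v i ≠ v j ∧ v i ≠ -v j) ∨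
      (v k = -v j ∧ v j ≠ 0 ∧ v i ≠ v j ∧ v i ≠ -v j)} := by
  have hall : ∀ l : Fin 3, l = i ∨ l = j ∨ l = k := by omega
  have e0 : {v : Fin 3 → ℂ | v i = 0 ∧ v j ≠ 0 ∧ v k ≠ 0} =
      (fun p : ℂ × ℂ => p.1 • ((Pi.single j 1 : Fin 3 → ℂ) + p.2 • Pi.single k 1)) ''
        (({0} : Set ℂ)ᶜ ×ˢ ({0} : Set ℂ)ᶜ) := by
    ext v
    simp only [Set.mem_ofPred_eq, Set.mem_image, Set.mem_prod, Set.mem_compl_iff,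
      Set.mem_singleton_iff, Prod.exists]
    constructor
    · rintro ⟨h1, h2, h3⟩
      refine ⟨v j, v k / v j, ⟨h2, div_ne_zero h3 h2⟩, funext fun l => ?_⟩
      rcases hall l with rfl | rfl | rfl <;> simp [*, hjk.symm]
      field_simp
    · rintro ⟨a, t, ⟨ha, ht⟩, rfl⟩
      simp [*, hjk.symm]
  have e1 (s : ℂ) : {v : Fin 3 → ℂ | v k = s * v j ∧ v j ≠ 0 ∧ v i ≠ v j ∧ v i ≠ -v j} =
      (fun p : ℂ × ℂ => p.1 • (((Pi.single j 1 : Fin 3 → ℂ) + s • Pi.single k 1)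
        + p.2 • Pi.single i 1)) '' (({0} : Set ℂ)ᶜ ×ˢ ({1, -1} : Set ℂ)ᶜ) := by
    ext v
    simp only [Set.mem_ofPred_eq, Set.mem_image, Set.mem_prod, Set.mem_compl_iff,
      Set.mem_singleton_iff, Set.mem_insert_iff, Prod.exists, not_or]
    constructor
    · rintro ⟨h1, h2, h3, h4⟩
      refine ⟨v j, v i / v j, ⟨h2, ?_, ?_⟩, funext fun l => ?_⟩
      · rwa [div_eq_one_iff_eq h2]
      · rw [div_eq_iff h2]; simpa using h4
      · rcases hall l with rfl | rfl | rfl <;> simp [*, hij.symm, hjk.symm, hik.symm] <;>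
          field_simp
    · rintro ⟨a, t, ⟨ha, ht, htneg⟩, rfl⟩
      simp [*, hij.symm, hjk.symm, hik.symm, mul_comm]
      grind
  have p0 := isPreconnected_punctured_plane (Pi.single j 1) (Pi.single k 1) {0} (by simp)
  have p1 (s : ℂ) := isPreconnected_punctured_plane
    ((Pi.single j 1 : Fin 3 → ℂ) + s • Pi.single k 1) (Pi.single i 1) {1, -1} (by simp)
  rw [← e0] at p0
  have pplus := p1 1
  have pminus := p1 (-1)
  rw [← e1] at pplus pminus
  -- The planes `v k = ± v j` meet `v i = 0` in the lines spanned by `e_j ± e_k`.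
  let q (s : ℂ) : Fin 3 → ℂ := Pi.single j 1 + s • Pi.single k 1
  have h01 := p0.union (q 1) (by simp [q, hij, hjk.symm, hik, hjk])
    (by simp [q, hij, hjk.symm, hik, hjk]) pplus
  have h02 := h01.union (q (-1)) (Or.inl (by simp [q, hij, hjk.symm, hik, hjk]))
    (by simp [q, hij, hjk.symm, hik, hjk]) pminus
  refine ⟨⟨q 1, Or.inl (by simp [q, hij, hjk.symm, hik, hjk])⟩, ?_⟩
  convert h02 using 1
  ext v
  simp [or_assoc]

lemma b3_connected (i : Fin 3) :
    IsConnected ((⋃ f ∈ B3.filter (fun f => b3Part f = i),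
      (LinearMap.ker f : Set (Fin 3 → ℂ))) \ ⋃ Z ∈ b3X, (Z : Set (Fin 3 → ℂ))) := by
  have hX (v : Fin 3 → ℂ) : v ∈ (⋃ Z ∈ b3X, (Z : Set (Fin 3 → ℂ))) ↔
      (v 1 = 0 ∧ v 2 = 0) ∨ (v 0 = 0 ∧ v 2 = 0) ∨ (v 0 = 0 ∧ v 1 = 0) ∨
      (v 1 = v 0 * 1 ∧ v 2 = v 0 * 1) ∨ (v 1 = v 0 * 1 ∧ v 2 = v 0 * -1) ∨
      (v 1 = v 0 * -1 ∧ v 2 = v 0 * 1) ∨ (v 1 = v 0 * -1 ∧ v 2 = v 0 * -1) := by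
    simp only [b3X, Finset.mem_image, Set.mem_iUnion, SetLike.mem_coe, exists_prop,
      exists_exists_and_eq_and]
    simp only [b3Dirs, Finset.mem_insert, Finset.mem_singleton, or_and_right,
      exists_or, exists_eq_left, mem_span_axis1, mem_span_axis2, mem_span_diag, mul_zero]
  have hA (v : Fin 3 → ℂ) : v ∈ (⋃ f ∈ B3.filter (fun f => b3Part f = i),
      (LinearMap.ker f : Set (Fin 3 → ℂ))) ↔
      (i = 0 ∧ (v 0 = 0 ∨ v 1 - v 2 = 0 ∨ v 1 + v 2 = 0)) ∨
      (i = 1 ∧ (v 1 = 0 ∨ v 0 - v 2 = 0 ∨ v 0 + v 2 = 0)) ∨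
      (i = 2 ∧ (v 2 = 0 ∨ v 0 - v 1 = 0 ∨ v 0 + v 1 = 0)) := by
    simp only [B3, Set.mem_iUnion, SetLike.mem_coe, exists_prop, Finset.mem_filter,
      Finset.mem_insert, Finset.mem_singleton, or_and_right, exists_or, and_assoc,
      exists_eq_left, b3Part_values, LinearMap.mem_ker,
      LinearMap.add_apply, LinearMap.sub_apply, xf_apply, yf_apply, zf_apply, eq_comm (b := i)]
    tauto
  obtain rfl | rfl | rfl : i = 0 ∨ i = 1 ∨ i = 2 := by omega
  · convert isConnected_model 0 1 2 (by decide) (by decide) (by decide) using 1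
    ext v
    rw [Set.mem_sdiff, hX, hA]
    simp
    grind
  · convert isConnected_model 1 0 2 (by decide) (by decide) (by decide) using 1
    ext v
    rw [Set.mem_sdiff, hX, hA]
    simp
    grind
  · convert isConnected_model 2 0 1 (by decide) (by decide) (by decide) using 1
    ext v
    rw [Set.mem_sdiff, hX, hA]
    simp
    grind

/-! ### The pointed multinet -/

/-- The multinet `x²(y² - z²), y²(x² - z²), z²(x² - y²)` on the `B₃` arrangement. -/
noncomputable def b3Multinet : Multinet B3 mB3 where
  k := 3
  three_le_k := le_rfl
  m_pos f _ := by unfold mB3; split_ifs <;> norm_num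
  part := b3Part
  part_surj i := by
    fin_cases i
    · exact ⟨xf, by simp [B3], by simp [b3Part_values]⟩
    · exact ⟨yf, by simp [B3], by simp [b3Part_values]⟩
    · exact ⟨zf, by simp [B3], by simp [b3Part_values]⟩
  X := b3X
  X_codim_two Z hZ := by
    obtain ⟨w, hw, rfl⟩ := Finset.mem_image.1 hZ
    rw [finrank_span_singleton]
    rintro rfl
    simp only [b3Dirs, Finset.mem_insert, Finset.mem_singleton] at hw
    rcases hw with h | h | h | h | h | h | h
    · simpa using congrFun h 0
    · simpa using congrFun h 1
    · simpa using congrFun h 2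
    all_goals simpa using congrFun h 0
  X_flat Z hZ := by
    obtain ⟨w, hw, rfl⟩ := Finset.mem_image.1 hZ
    exact b3_flat w hw
  inf_mem_X := b3_inf_mem
  d := 4
  sum_part := b3_sum_part
  nZ Z := ∑ f ∈ B3.filter (fun f => b3Part f = 0 ∧ Z ≤ LinearMap.ker f), mB3 f
  sum_flat Z hZ i := by
    obtain ⟨w, hw, rfl⟩ := Finset.mem_image.1 hZ
    rw [b3_sum_flat w hw, b3_sum_flat w hw]
  connected := b3_connected

theorem B3_admits_pointed_multinet :
    ∃ M : Multinet B3 mB3, M.PointedAt zf := by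
  refine ⟨b3Multinet, by simp [B3], by simp [mB3_values], fun Z hZ hz => ?_⟩
  obtain ⟨w, hw, rfl⟩ := Finset.mem_image.1 hZ
  have hw2 : w 2 = 0 := by simpa [Submodule.span_singleton_le_iff_mem] using hz
  have hn : b3Multinet.nZ (Submodule.span ℂ {w}) = 2 := by
    simp only [b3Multinet]
    rw [b3_sum_flat w hw, hw2]
    simp
  rw [hn]
  simp [mB3_values]
end

section
/- For every prime p, there exists a central hyperplane arrangement A (in some ℂ^ℓ) that admits a multinet with multiplicity vector m pointed at some hyperplane H ∈ A such that p divides m_H. (For p = 2 one may take the B_3 reflection arrangement; for odd p one may take the reflection arrangement A(p,1,3) of the full monomial group, defined by the polynomial xyz(x^p−y^p)(x^p−z^p)(y^p−z^p) in ℂ³.) -/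
/-!
The witness is the reflection arrangement of the full monomial group `G(p,1,3)`, with defining
polynomial `xyz(x^p - y^p)(y^p - z^p)(z^p - x^p)`. For a coordinate index `i` (mod 3), the `i`-th
part consists of the hyperplane `x i = 0` with multiplicity `p` and the `p` hyperplanes
`x (i+1) = ζ * x (i+2)`, `ζ ^ p = 1`, with multiplicity one; each part has total multiplicity `2p`.

Two hyperplanes of different parts meet either in a coordinate axis or in a line spanned by a
vector all of whose coordinates are `p`-th roots of unity (`ker_inf_ker`). On a coordinate axis
every part has multiplicity `p`, and on a line of the other kind it has multiplicity `1`
(`sum_axis`, `sum_root`). The lines of the second kind avoid the coordinate hyperplanes, so the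
multinet is pointed at each coordinate hyperplane, whose multiplicity is `p`.

Connectedness of the parts: a complex subspace minus finitely many subspaces is connected, because
the complex affine line through two of its points meets the removed set in a finite set
(`isPreconnected_diff`). Inside the `i`-th part, every hyperplane `x (i+1) = ζ * x (i+2)` meets
`x i = 0` in a point with exactly one vanishing coordinate, and such a point lies on none of
the removed lines.
-/

open scoped Classical


namespace FullMonomial

variable {p : ℕ}

/-- Indices of the hyperplanes: `(i, none)` stands for `x i = 0`, and `(i, some ζ)` for
`x (i+1) = ζ * x (i+2)`. The first component is the part of the multinet. -/
abbrev Idx (p : ℕ) : Type := Fin 3 × Option (rootsOfUnity p ℂ)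

/-- The linear form attached to an index. -/
noncomputable def form : Idx p → ((Fin 3 → ℂ) →ₗ[ℂ] ℂ)
  | (i, none) => LinearMap.proj i
  | (i, some ζ) => LinearMap.proj (i + 1) - ((ζ : ℂˣ) : ℂ) • LinearMap.proj (i + 2)

/-- The multiplicity attached to an index: `p` for a coordinate hyperplane, `1` otherwise. -/
def mult : Idx p → ℕ
  | (_, none) => p
  | (_, some _) => 1

@[simp] lemma form_none (i : Fin 3) (x : Fin 3 → ℂ) : form (p := p) (i, none) x = x i := rfl

@[simp] lemma form_some (i : Fin 3) (ζ : rootsOfUnity p ℂ) (x : Fin 3 → ℂ) :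
    form (i, some ζ) x = x (i + 1) - ((ζ : ℂˣ) : ℂ) * x (i + 2) := rfl

lemma eq_of_form_eq_smul (a b : Idx p) (c : ℂ) (h : form a = c • form b) : a = b := by
  have key (x : Fin 3 → ℂ) : form a x = c * form b x := by rw [h]; rfl
  have h0 := key (Pi.single 0 1)
  have h1 := key (Pi.single 1 1)
  have h2 := key (Pi.single 2 1)
  obtain ⟨i, _ | ζ⟩ := a <;> obtain ⟨j, _ | η⟩ := b <;> fin_cases i <;> fin_cases j <;>
    simp at h0 h1 h2 ⊢ <;> subst_vars <;> simp at *
  all_goals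
    refine Subtype.ext (Units.ext ?_)
    assumption

lemma form_injective : Function.Injective (form (p := p)) :=
  fun a b h => eq_of_form_eq_smul a b 1 (by simpa using h)

lemma form_ne_zero (a : Idx p) : form a ≠ 0 := by
  intro h
  have := eq_of_form_eq_smul a (a.1 + 1, none) 0 (by simpa using h)
  have h1 := congrArg Prod.fst this
  simp at h1

/-- The spanning vector of a line of the multinet: a coordinate vector, or a vector of
`p`-th roots of unity. -/
def IsBase (p : ℕ) (v : Fin 3 → ℂ) : Prop :=
  (∃ c, v = Pi.single c 1) ∨ ∃ r : Fin 3 → rootsOfUnity p ℂ, v = fun i => ((r i : ℂˣ) : ℂ)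

/-- Two hyperplanes in cyclically consecutive parts meet in one of the prescribed lines. -/
lemma ker_inf_ker_succ (i : Fin 3) (o o' : Option (rootsOfUnity p ℂ)) :
    ∃ v, IsBase p v ∧
      LinearMap.ker (form (i, o)) ⊓ LinearMap.ker (form (i + 1, o')) = Submodule.span ℂ {v} := by
  have key (v : Fin 3 → ℂ) (h1 : form (i, o) v = 0) (h2 : form (i + 1, o') v = 0)
      (h3 : ∀ x, form (i, o) x = 0 → form (i + 1, o') x = 0 → ∃ c : ℂ, c • v = x) :
      LinearMap.ker (form (i, o)) ⊓ LinearMap.ker (form (i + 1, o')) = Submodule.span ℂ {v} := by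
    apply le_antisymm
    · rintro x ⟨hx1, hx2⟩
      exact Submodule.mem_span_singleton.2 (h3 x hx1 hx2)
    · rw [Submodule.span_singleton_le_iff_mem]
      exact ⟨h1, h2⟩
  rcases o with _ | ζ <;> rcases o' with _ | η
  · refine ⟨Pi.single (i + 2) 1, .inl ⟨_, rfl⟩, key _ ?_ ?_ fun x hx1 hx2 => ⟨x (i + 2), ?_⟩⟩ <;>
      fin_cases i <;> simp at * <;> ext k <;> fin_cases k <;> simp_all
  · refine ⟨Pi.single (i + 1) 1, .inl ⟨_, rfl⟩, key _ ?_ ?_ fun x hx1 hx2 => ⟨x (i + 1), ?_⟩⟩ <;>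
      fin_cases i <;> simp at * <;> ext k <;> fin_cases k <;> simp_all
  · refine ⟨Pi.single i 1, .inl ⟨_, rfl⟩, key _ ?_ ?_ fun x hx1 hx2 => ⟨x i, ?_⟩⟩ <;>
      fin_cases i <;> simp at * <;> ext k <;> fin_cases k <;> simp_all
  · refine ⟨_, .inr ⟨fun k => if k = i then 1 else if k = i + 1 then ζ * η else η, rfl⟩,
      key _ ?_ ?_ fun x hx1 hx2 => ⟨x i, ?_⟩⟩
    · fin_cases i <;> simp
    · fin_cases i <;> simp
    · rw [form_some, sub_eq_zero] at hx1 hx2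
      ext k
      fin_cases i <;> fin_cases k <;> simp at hx1 hx2 ⊢ <;> simp only [hx1, hx2] <;> ring

lemma ker_inf_ker (a b : Idx p) (h : a.1 ≠ b.1) :
    ∃ v, IsBase p v ∧
      LinearMap.ker (form a) ⊓ LinearMap.ker (form b) = Submodule.span ℂ {v} := by
  obtain ⟨i, o⟩ := a
  obtain ⟨j, o'⟩ := b
  have cyc : ∀ i j : Fin 3, i ≠ j → j = i + 1 ∨ i = j + 1 := by decide
  rcases cyc i j h with rfl | rfl
  · exact ker_inf_ker_succ i o o'
  · rw [inf_comm]
    exact ker_inf_ker_succ j o' o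

lemma IsBase.ne_zero {v : Fin 3 → ℂ} (hv : IsBase p v) : v ≠ 0 := by
  rcases hv with ⟨c, rfl⟩ | ⟨r, rfl⟩
  · simp
  · exact fun h => (r 0 : ℂˣ).ne_zero (congrFun h 0)

/-- A point with exactly one vanishing coordinate lies on none of the lines of the multinet. -/
lemma notMem_span {v w : Fin 3 → ℂ} (hv : IsBase p v) (i : Fin 3) (h0 : w i = 0)
    (h1 : w (i + 1) ≠ 0) (h2 : w (i + 2) ≠ 0) : w ∉ Submodule.span ℂ {v} := by
  rw [Submodule.mem_span_singleton]
  rintro ⟨c, rfl⟩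
  rcases hv with ⟨k, rfl⟩ | ⟨r, rfl⟩
  · fin_cases i <;> fin_cases k <;> simp at h0 h1 h2
  · simp_all

/-- The multiplicity as a function of the linear form (zero off the arrangement). -/
noncomputable def mul (p : ℕ) (f : (Fin 3 → ℂ) →ₗ[ℂ] ℂ) : ℕ :=
  Function.extend (form (p := p)) mult 0 f

/-- The part containing a linear form (the value `0` off the arrangement is irrelevant). -/
noncomputable def part (p : ℕ) (f : (Fin 3 → ℂ) →ₗ[ℂ] ℂ) : Fin 3 :=
  Function.extend (form (p := p)) Prod.fst 0 f

@[simp] lemma mul_form (a : Idx p) : mul p (form a) = mult a :=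
  form_injective.extend_apply _ _ _

@[simp] lemma part_form (a : Idx p) : part p (form a) = a.1 :=
  form_injective.extend_apply _ _ _

variable [NeZero p]

noncomputable instance instFintypeRoots : Fintype (rootsOfUnity p ℂ) := Fintype.ofFinite _

lemma card_roots : Fintype.card (rootsOfUnity p ℂ) = p := by
  rw [← Nat.card_eq_fintype_card, Complex.card_rootsOfUnity]

/-- On a coordinate axis, every part has multiplicity `p`. -/
lemma sum_axis (i c : Fin 3) :
    ∑ o : Option (rootsOfUnity p ℂ),
      (if form (i, o) (Pi.single c 1) = 0 then mult (i, o) else 0) = p := by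
  fin_cases i <;> fin_cases c <;>
    simp [Fintype.sum_option, mult, card_roots]

/-- On a line spanned by roots of unity, every part has multiplicity one: the hyperplane of part
`i` containing it is the one with `ζ = r (i+1) / r (i+2)`. -/
lemma sum_root (i : Fin 3) (r : Fin 3 → rootsOfUnity p ℂ) :
    ∑ o : Option (rootsOfUnity p ℂ),
      (if form (i, o) (fun k => ((r k : ℂˣ) : ℂ)) = 0 then mult (i, o) else 0) = 1 := by
  have h (ζ : rootsOfUnity p ℂ) :
      ((r (i + 1) : ℂˣ) : ℂ) - ((ζ : ℂˣ) : ℂ) * ((r (i + 2) : ℂˣ) : ℂ) = 0 ↔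
        r (i + 1) * (r (i + 2))⁻¹ = ζ := by
    rw [sub_eq_zero, mul_inv_eq_iff_eq_mul, Subtype.ext_iff, Units.ext_iff]
    simp
  simp [Fintype.sum_option, mult, h]

/-- Removing finitely many subspaces from a complex subspace leaves a preconnected set. -/
lemma isPreconnected_diff (P : Submodule ℂ (Fin 3 → ℂ))
    (X : Finset (Submodule ℂ (Fin 3 → ℂ))) :
    IsPreconnected ((P : Set (Fin 3 → ℂ)) \ ⋃ Z ∈ X, (Z : Set (Fin 3 → ℂ))) := by
  apply isPreconnected_of_forall_pair
  rintro a ⟨haP, haX⟩ b ⟨hbP, hbX⟩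
  simp only [Set.mem_iUnion, SetLike.mem_coe, not_exists] at haX hbX
  -- The parameters `t` for which `a + t (b - a)` lies in a removed subspace.
  set B : Set ℂ := ⋃ Z ∈ X, {t : ℂ | a + t • (b - a) ∈ Z} with hB
  have hfin : B.Finite := by
    refine X.finite_toSet.biUnion fun Z hZ => Set.Subsingleton.finite ?_
    intro s hs t ht
    by_contra hst
    have h1 : (s - t) • (b - a) ∈ Z := by
      have := Z.sub_mem hs ht
      convert this using 1
      module
    have h2 : b - a ∈ Z := (Z.smul_mem_iff (sub_ne_zero.2 hst)).1 h1
    exact haX Z hZ (by simpa using Z.sub_mem hs (Z.smul_mem s h2))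
  have hconn : IsPreconnected Bᶜ :=
    (hfin.countable.isPathConnected_compl_of_one_lt_rank
      (by rw [Complex.rank_real_complex]; norm_num)).isConnected.isPreconnected
  refine ⟨(fun t : ℂ => a + t • (b - a)) '' Bᶜ, ?_, ?_, ?_,
    hconn.image _ (by fun_prop)⟩
  · rintro _ ⟨t, ht, rfl⟩
    refine ⟨P.add_mem haP (P.smul_mem _ (P.sub_mem hbP haP)), fun h => ht ?_⟩
    simpa [hB] using h
  · exact ⟨0, by simpa [hB] using haX, by simp⟩
  · exact ⟨1, by simpa [hB] using hbX, by simp⟩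

/-- The full monomial arrangement. -/
noncomputable def arr (p : ℕ) [NeZero p] : Finset ((Fin 3 → ℂ) →ₗ[ℂ] ℂ) :=
  Finset.univ.map ⟨form (p := p), form_injective⟩

/-- The lines in which hyperplanes of different parts meet. -/
noncomputable def lines (p : ℕ) [NeZero p] : Finset (Submodule ℂ (Fin 3 → ℂ)) :=
  (Finset.univ.filter fun q : Idx p × Idx p => q.1.1 ≠ q.2.1).image
    fun q => LinearMap.ker (form q.1) ⊓ LinearMap.ker (form q.2)

lemma mem_arr {f : (Fin 3 → ℂ) →ₗ[ℂ] ℂ} : f ∈ arr p ↔ ∃ a : Idx p, form a = f := by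
  simp [arr]

lemma exists_base {Z : Submodule ℂ (Fin 3 → ℂ)} (hZ : Z ∈ lines p) :
    ∃ v, IsBase p v ∧ Z = Submodule.span ℂ {v} := by
  simp only [lines, Finset.mem_image, Finset.mem_filter, Finset.mem_univ, true_and] at hZ
  obtain ⟨q, hq, rfl⟩ := hZ
  exact ker_inf_ker _ _ hq

/-- Sums over the `i`-th part, rewritten as sums over its index set. -/
lemma sum_arr (i : Fin 3) (P : ((Fin 3 → ℂ) →ₗ[ℂ] ℂ) → Prop) :
    ∑ f ∈ (arr p).filter (fun f => part p f = i ∧ P f), mul p f =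
      ∑ o : Option (rootsOfUnity p ℂ), if P (form (i, o)) then mult (i, o) else 0 := by
  rw [Finset.sum_filter, arr, Finset.sum_map, Fintype.sum_prod_type]
  simp only [Function.Embedding.coeFn_mk, part_form, mul_form]
  rw [Finset.sum_eq_single i]
  · simp
  · intro j _ hj
    simp [hj]
  · simp

lemma sum_arr_axis (i c : Fin 3) :
    ∑ f ∈ (arr p).filter (fun f => part p f = i ∧
      Submodule.span ℂ {(Pi.single c 1 : Fin 3 → ℂ)} ≤ LinearMap.ker f), mul p f = p := by
  rw [sum_arr]
  simpa only [Submodule.span_singleton_le_iff_mem, LinearMap.mem_ker] using sum_axis i c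

lemma sum_arr_root (i : Fin 3) (r : Fin 3 → rootsOfUnity p ℂ) :
    ∑ f ∈ (arr p).filter (fun f => part p f = i ∧
      Submodule.span ℂ {(fun k => ((r k : ℂˣ) : ℂ) : Fin 3 → ℂ)} ≤ LinearMap.ker f),
      mul p f = 1 := by
  rw [sum_arr]
  simpa only [Submodule.span_singleton_le_iff_mem, LinearMap.mem_ker] using sum_root i r

/-- The `i`-th part with the lines removed is the union over `ζ` of the connected sets
`{x i = 0} ∪ {x (i+1) = ζ * x (i+2)}` with the lines removed. -/
lemma isConnected_part (i : Fin 3) :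
    IsConnected ((⋃ f ∈ (arr p).filter (fun f => part p f = i),
      (LinearMap.ker f : Set (Fin 3 → ℂ))) \ ⋃ Z ∈ lines p, (Z : Set (Fin 3 → ℂ))) := by
  set U : Set (Fin 3 → ℂ) := ⋃ Z ∈ lines p, (Z : Set (Fin 3 → ℂ)) with hU
  let S (o : Option (rootsOfUnity p ℂ)) : Set (Fin 3 → ℂ) :=
    (LinearMap.ker (form (i, o)) : Set (Fin 3 → ℂ)) \ U
  have hS (o) : IsPreconnected (S o) := isPreconnected_diff _ _
  -- A point common to `x i = 0` and `x (i+1) = ζ * x (i+2)`.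
  let w (ζ : rootsOfUnity p ℂ) : Fin 3 → ℂ :=
    fun k => if k = i then 0 else if k = i + 1 then ((ζ : ℂˣ) : ℂ) else 1
  have hw0 (ζ) : w ζ i = 0 := by simp [w]
  have hw1 (ζ) : w ζ (i + 1) = ((ζ : ℂˣ) : ℂ) := by simp [w]
  have hw2 (ζ) : w ζ (i + 2) = 1 := by fin_cases i <;> simp [w]
  have hwU (ζ) : w ζ ∉ U := by
    simp only [hU, Set.mem_iUnion, not_exists]
    intro Z hZ
    obtain ⟨v, hv, rfl⟩ := exists_base hZ
    exact notMem_span hv i (hw0 ζ) (by simp [hw1]) (by simp [hw2])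
  have hwn (ζ) : w ζ ∈ S none := ⟨by simp [hw0], hwU ζ⟩
  have hws (ζ) : w ζ ∈ S (some ζ) := ⟨by simp [hw1, hw2], hwU ζ⟩
  have heq : (⋃ f ∈ (arr p).filter (fun f => part p f = i),
      (LinearMap.ker f : Set (Fin 3 → ℂ))) \ U =
      ⋃ ζ : rootsOfUnity p ℂ, (S none ∪ S (some ζ)) := by
    ext x
    simp only [Set.mem_sdiff, Set.mem_iUnion, Finset.mem_filter, mem_arr, Set.mem_union, S]
    constructor
    · rintro ⟨⟨_, ⟨⟨⟨j, o⟩, rfl⟩, hj⟩, hx⟩, hxU⟩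
      obtain rfl : j = i := by simpa using hj
      rcases o with _ | ζ
      · exact ⟨1, .inl ⟨hx, hxU⟩⟩
      · exact ⟨ζ, .inr ⟨hx, hxU⟩⟩
    · rintro ⟨ζ, ⟨hx, hxU⟩ | ⟨hx, hxU⟩⟩
      · exact ⟨⟨_, ⟨⟨_, rfl⟩, by simp⟩, hx⟩, hxU⟩
      · exact ⟨⟨_, ⟨⟨_, rfl⟩, by simp⟩, hx⟩, hxU⟩
  rw [heq]
  exact ⟨⟨w 1, Set.mem_iUnion.2 ⟨1, .inl (hwn 1)⟩⟩,
    isPreconnected_iUnion ⟨w 1, Set.mem_iInter.2 fun _ => .inl (hwn 1)⟩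
      fun ζ => (hS none).union (w ζ) (hwn ζ) (hws ζ) (hS (some ζ))⟩

/-- The multinet on the full monomial arrangement; its parts are indexed by the coordinates. -/
noncomputable def multinet (p : ℕ) [NeZero p] : Multinet (arr p) (mul p) where
  k := 3
  three_le_k := le_rfl
  m_pos := by
    intro f hf
    obtain ⟨⟨i, _ | ζ⟩, rfl⟩ := mem_arr.1 hf <;> simp [mult, Nat.pos_of_neZero]
  part := part p
  part_surj i := ⟨form (i, none), mem_arr.2 ⟨_, rfl⟩, by simp⟩
  X := lines p
  X_codim_two := by
    intro Z hZ
    obtain ⟨v, hv, rfl⟩ := exists_base hZ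
    rw [finrank_span_singleton hv.ne_zero]
  X_flat := by
    intro Z hZ
    simp only [lines, Finset.mem_image] at hZ
    obtain ⟨q, -, rfl⟩ := hZ
    refine ⟨{form q.1, form q.2}, ?_, by simp⟩
    intro f hf
    rcases Finset.mem_insert.1 hf with rfl | hf
    · exact mem_arr.2 ⟨_, rfl⟩
    · exact mem_arr.2 ⟨_, (Finset.mem_singleton.1 hf).symm⟩
  inf_mem_X := by
    intro f hf g hg hfg
    obtain ⟨a, rfl⟩ := mem_arr.1 hf
    obtain ⟨b, rfl⟩ := mem_arr.1 hg
    exact Finset.mem_image.2 ⟨(a, b), by simpa using hfg, rfl⟩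
  d := 2 * p
  sum_part i := by
    have := sum_arr (p := p) i (fun _ => True)
    simp only [and_true, if_true] at this
    rw [this]
    simp [Fintype.sum_option, mult, card_roots, two_mul]
  nZ Z := ∑ f ∈ (arr p).filter (fun f => part p f = 0 ∧ Z ≤ LinearMap.ker f), mul p f
  sum_flat := by
    intro Z hZ i
    obtain ⟨v, ⟨c, rfl⟩ | ⟨r, rfl⟩, rfl⟩ := exists_base hZ
    · rw [sum_arr_axis, sum_arr_axis]
    · rw [sum_arr_root, sum_arr_root]
  connected := isConnected_part

lemma pointedAt (hp : 1 < p) : (multinet p).PointedAt (form (p := p) (0, none)) := by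
  refine ⟨mem_arr.2 ⟨_, rfl⟩, by simpa [mult] using hp, ?_⟩
  intro Z hZ hle
  obtain ⟨v, ⟨c, rfl⟩ | ⟨r, rfl⟩, rfl⟩ := exists_base hZ
  · have : (multinet p).nZ (Submodule.span ℂ {Pi.single c 1}) = p := sum_arr_axis 0 c
    rw [this, mul_form]
    rfl
  · -- A line spanned by roots of unity is not contained in a coordinate hyperplane.
    rw [Submodule.span_singleton_le_iff_mem] at hle
    simp at hle

end FullMonomial

theorem exists_pointed_multinet_with_multiplicity_divisible_by_p (p : ℕ) (hp : p.Prime) :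
    ∃ (ℓ : ℕ) (A : Finset ((Fin ℓ → ℂ) →ₗ[ℂ] ℂ)),
      (∀ f ∈ A, f ≠ 0) ∧
      (∀ f ∈ A, ∀ g ∈ A, f ≠ g → ∀ c : ℂ, f ≠ c • g) ∧
      ∃ (m : ((Fin ℓ → ℂ) →ₗ[ℂ] ℂ) → ℕ) (M : Multinet A m) (h : (Fin ℓ → ℂ) →ₗ[ℂ] ℂ),
        M.PointedAt h ∧ p ∣ m h := by
  have : NeZero p := ⟨hp.ne_zero⟩
  refine ⟨3, FullMonomial.arr p, ?_, ?_, FullMonomial.mul p, FullMonomial.multinet p,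
    FullMonomial.form (p := p) (0, none), FullMonomial.pointedAt hp.one_lt, ?_⟩
  · intro f hf
    obtain ⟨a, rfl⟩ := FullMonomial.mem_arr.1 hf
    exact FullMonomial.form_ne_zero a
  · intro f hf g hg hne c hc
    obtain ⟨a, rfl⟩ := FullMonomial.mem_arr.1 hf
    obtain ⟨b, rfl⟩ := FullMonomial.mem_arr.1 hg
    exact hne (congrArg _ (FullMonomial.eq_of_form_eq_smul a b c hc))
  · rw [FullMonomial.mul_form]
    exact dvd_rfl
end
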